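/- Let f(β) := (1/n) ∑_{i=1}^{n} ρ_{Q,τ}(Y_i − ⟨X_i, β⟩), where {X_i}_{i=1}^n follow Assumption 1 and {(X_i, Y_i)}_{i=1}^n are independent observations from the linear quantile model with noise ξ_i. Then: (i) for any fixed β_1, β_2 ∈ R^d and s > 0, with probability exceeding 1 − 2 exp(−C n s²/(C_u ‖β_1 − β_2‖_2²)) for some constant C, it holds that |f(β_1) − f(β_2) − E[f(β_1) − f(β_2)]| ≤ s; and (ii) for any fixed β_1 and s > 0, with probability exceeding 1 − 2 exp(−c_1 n s²/(C_u max{τ², (1−τ)²} ‖β_1 − β*‖_2²)), it holds that (1/n)|∑_{i=1}^{n} (⟨β_1 − β*, X_i⟩ · g_i − E[⟨β_1 − β*, X_i⟩ · g_i])| ≤ s, where g_i := −τ·1{ξ_i > ⟨X_i, β_1 − β*⟩} + (1−τ)·1{ξ_i < ⟨X_i, β_1 − β*⟩} + δ·1{ξ_i = ⟨X_i, β_1 − β*⟩} is the sub-gradient factor for any δ ∈ [−τ, 1−τ]. -/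

import Mathlib

open MeasureTheory ProbabilityTheory

noncomputable section

/-- The quantile (check) loss `ρ_{Q,τ}(x) = τ x 1{x ≥ 0} + (τ−1) x 1{x < 0}`. -/
def qloss (τ x : ℝ) : ℝ := if 0 ≤ x then τ * x else (τ - 1) * x

/-- The quadratic form `v ↦ vᵀ Σ v` of a matrix on Euclidean space. -/
def quadForm {d : ℕ} (S : Matrix (Fin d) (Fin d) ℝ) (v : EuclideanSpace ℝ (Fin d)) : ℝ :=
  dotProduct (fun i => v i) (S.mulVec fun i => v i)

/-- The sub-gradient factor of the quantile loss:
`−τ 1{u > 0} + (1−τ) 1{u < 0} + δ 1{u = 0}` with `δ ∈ [−τ, 1−τ]`. -/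
def qsubgrad (τ δ u : ℝ) : ℝ := if 0 < u then -τ else if u < 0 then 1 - τ else δ

lemma aux_subG {Ω : Type} [MeasurableSpace Ω] {μ : Measure Ω} [IsProbabilityMeasure μ]
    {Z G : Ω → ℝ} {K : ℝ} {v B : NNReal} (hZ : Measurable Z) (hG : Measurable G)
    (hmap : μ.map G = gaussianReal 0 v) (hK : 0 ≤ K) (hZG : ∀ ω, |Z ω| ≤ K * |G ω|)
    (hB : K ^ 2 * v ≤ B) :
    Integrable Z μ ∧ HasSubgaussianMGF (fun ω => Z ω - ∫ ω', Z ω' ∂μ) (2 * B) μ := by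
  have hGint : ∀ t : ℝ, Integrable (fun ω => Real.exp (t * G ω)) μ := by
    intro t
    have h := integrable_exp_mul_gaussianReal (μ := 0) (v := v) t
    rw [← hmap] at h
    exact h.comp_measurable hG
  have hpt : ∀ t ω, Real.exp (t * Z ω) + Real.exp (-t * Z ω)
      ≤ Real.exp ((t * K) * G ω) + Real.exp (-(t * K) * G ω) := by
    intro t ω
    have h : Real.cosh (t * Z ω) ≤ Real.cosh ((t * K) * G ω) := by
      rw [Real.cosh_le_cosh, abs_mul, abs_mul, abs_mul, abs_of_nonneg hK, mul_assoc]
      exact mul_le_mul_of_nonneg_left (hZG ω) (abs_nonneg t)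
    rw [Real.cosh_eq, Real.cosh_eq] at h
    rw [neg_mul, neg_mul]
    linarith
  have hZint : ∀ t : ℝ, Integrable (fun ω => Real.exp (t * Z ω)) μ := by
    intro t
    refine ((hGint (t * K)).add (hGint (-(t * K)))).mono' (by fun_prop) (ae_of_all _ ?_)
    intro ω
    rw [Real.norm_eq_abs, abs_of_pos (Real.exp_pos _)]
    have := hpt t ω
    have := Real.exp_pos (-t * Z ω)
    simp only [Pi.add_apply]
    linarith
  have hset : integrableExpSet Z μ = Set.univ := by
    ext t; simpa [integrableExpSet] using hZint t
  have hZi : Integrable Z μ := by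
    have := memLp_of_mem_interior_integrableExpSet (X := Z) (μ := μ) (by simp [hset]) 1
    exact memLp_one_iff_integrable.1 (by simpa using this)
  refine ⟨hZi, ?_, ?_⟩
  · intro t
    simp only [mul_sub, Real.exp_sub]
    exact (hZint t).div_const _
  · intro t
    have h1 : mgf (fun ω => Z ω - ∫ ω', Z ω' ∂μ) μ t
        = mgf Z μ t * Real.exp (-t * ∫ ω', Z ω' ∂μ) := by
      simp only [mgf]
      rw [← integral_mul_const]
      congr 1; ext ω; rw [← Real.exp_add]; ring_nf
    have h2 : Real.exp (-t * ∫ ω', Z ω' ∂μ) ≤ mgf Z μ (-t) := by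
      rw [← integral_const_mul]
      exact convexOn_exp.map_integral_le Real.continuous_exp.continuousOn isClosed_univ
        (by simp) (hZi.const_mul _) (hZint (-t))
    have h3 : mgf Z μ t + mgf Z μ (-t) ≤ 2 * Real.exp (v * (t * K) ^ 2 / 2) := by
      have e1 := mgf_gaussianReal hmap (t * K)
      have e2 := mgf_gaussianReal hmap (-(t * K))
      simp only [zero_mul, zero_add, neg_sq] at e1 e2
      have : mgf Z μ t + mgf Z μ (-t) ≤ mgf G μ (t * K) + mgf G μ (-(t * K)) := by
        simp only [mgf]
        rw [← integral_add (hZint _) (hZint _), ← integral_add (hGint _) (hGint _)]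
        exact integral_mono ((hZint _).add (hZint _)) ((hGint _).add (hGint _)) (hpt t)
      linarith
    have p1 : 0 ≤ mgf Z μ t := mgf_nonneg
    have p2 : 0 ≤ mgf Z μ (-t) := mgf_nonneg
    rw [h1]
    calc mgf Z μ t * Real.exp (-t * ∫ ω', Z ω' ∂μ) ≤ mgf Z μ t * mgf Z μ (-t) := by gcongr
      _ ≤ Real.exp (v * (t * K) ^ 2 / 2) ^ 2 := by
        nlinarith [sq_nonneg (mgf Z μ t - mgf Z μ (-t)), Real.exp_pos (v * (t * K) ^ 2 / 2)]
      _ = Real.exp ((K ^ 2 * v) * t ^ 2) := by rw [← Real.exp_nat_mul]; push_cast; ring_nf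
      _ ≤ _ := by
        apply Real.exp_le_exp.2
        push_cast
        nlinarith [mul_le_mul_of_nonneg_right hB (sq_nonneg t)]

lemma aux_conc {Ω : Type} [MeasurableSpace Ω] {μ : Measure Ω} [IsProbabilityMeasure μ]
    {n : ℕ} (hn : 0 < n) {Z G : Fin n → Ω → ℝ} {K : ℝ} {v B : NNReal}
    (hZ : ∀ i, Measurable (Z i)) (hG : ∀ i, Measurable (G i))
    (hmap : ∀ i, μ.map (G i) = gaussianReal 0 v) (hK : 0 ≤ K)
    (hZG : ∀ i ω, |Z i ω| ≤ K * |G i ω|) (hB : K ^ 2 * v ≤ B) (hind : iIndepFun Z μ)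
    {s : ℝ} (hs : 0 < s) :
    ENNReal.ofReal (1 - 2 * Real.exp (-(1 / 4 * n * s ^ 2 / B))) ≤
      μ {ω | (n : ℝ)⁻¹ * |∑ i, (Z i ω - ∫ ω', Z i ω' ∂μ)| ≤ s} := by
  have hn' : (0 : ℝ) < n := by exact_mod_cast hn
  set W : Ω → ℝ := fun ω => ∑ i, (Z i ω - ∫ ω', Z i ω' ∂μ) with hW
  have hsub : HasSubgaussianMGF W (∑ _i : Fin n, 2 * B) μ := by
    refine HasSubgaussianMGF.sum_of_iIndepFun
      (X := fun i ω => Z i ω - ∫ ω', Z i ω' ∂μ) ?_ (c := fun _ => 2 * B) ?_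
    · exact hind.comp (fun i x => x - ∫ ω', Z i ω' ∂μ) (fun i => by fun_prop)
    · intro i _
      exact (aux_subG (hZ i) (hG i) (hmap i) hK (hZG i) hB).2
  have hWm : Measurable W := by fun_prop
  have hexp : Real.exp (-(n * s) ^ 2 / (2 * ((∑ _i : Fin n, 2 * B : NNReal) : ℝ)))
      = Real.exp (-(1 / 4 * n * s ^ 2 / B)) := by
    congr 1
    push_cast
    simp only [Finset.sum_const, Finset.card_univ, Fintype.card_fin, nsmul_eq_mul]
    rcases eq_or_ne (B : ℝ) 0 with h | h
    · simp [h]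
    · field_simp; ring
  have a1 := hsub.measure_ge_le (ε := n * s) (by positivity)
  have a2 := hsub.neg.measure_ge_le (ε := n * s) (by positivity)
  rw [hexp] at a1 a2
  set E := {ω | (n : ℝ)⁻¹ * |W ω| ≤ s} with hE
  have hEm : MeasurableSet E := measurableSet_le (by fun_prop) (by fun_prop)
  have hc : Eᶜ ⊆ {ω | n * s ≤ W ω} ∪ {ω | n * s ≤ (-W) ω} := by
    intro ω hω
    simp only [hE, Set.mem_compl_iff, Set.mem_ofPred_eq, not_le] at hω
    rw [inv_mul_eq_div, lt_div_iff₀ hn'] at hω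
    simp only [Set.mem_union, Set.mem_ofPred_eq, Pi.neg_apply]
    rw [← le_abs]
    linarith
  have hle : μ.real Eᶜ ≤ 2 * Real.exp (-(1 / 4 * n * s ^ 2 / B)) := by
    have := (measureReal_mono (μ := μ) hc).trans (measureReal_union_le _ _)
    linarith
  rw [probReal_compl_eq_one_sub hEm] at hle
  rw [← ofReal_measureReal (measure_ne_top μ E)]
  exact ENNReal.ofReal_le_ofReal (by linarith)

lemma qloss_lip {τ : ℝ} (h : τ ∈ Set.Ioo (0 : ℝ) 1) (a b : ℝ) :
    |qloss τ a - qloss τ b| ≤ |a - b| := by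
  obtain ⟨h0, h1⟩ := h
  unfold qloss
  rw [abs_le]
  split_ifs <;> constructor <;> cases abs_cases (a - b) <;> nlinarith

lemma qsubgrad_bound {τ δ : ℝ} (h : τ ∈ Set.Ioo (0 : ℝ) 1) (hδ : δ ∈ Set.Icc (-τ) (1 - τ)) (u : ℝ) :
    |qsubgrad τ δ u| ≤ max τ (1 - τ) := by
  obtain ⟨h0, h1⟩ := h
  obtain ⟨h2, h3⟩ := hδ
  have := le_max_left τ (1 - τ)
  have := le_max_right τ (1 - τ)
  unfold qsubgrad
  rw [abs_le]
  split_ifs <;> constructor <;> linarith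

lemma measurable_qloss (τ : ℝ) : Measurable (qloss τ) :=
  Measurable.ite measurableSet_Ici (by fun_prop) (by fun_prop)

lemma measurable_qsubgrad (τ δ : ℝ) : Measurable (qsubgrad τ δ) :=
  Measurable.ite measurableSet_Ioi (by fun_prop)
    (Measurable.ite measurableSet_Iio (by fun_prop) (by fun_prop))

/-- **Pointwise concentration with independence** (Proposition `concentration with
independence`): there are universal constants `C, c₁ > 0` such that, in the linear quantile
model with Gaussian covariates (Assumption 1) and independent observations:
(i) for fixed `β₁, β₂` and any `s > 0`, with probability at least
`1 − 2 exp(−C n s²/(C_u ‖β₁ − β₂‖²))`, the centered empirical loss difference is `≤ s`;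
(ii) for fixed `β₁`, any `δ ∈ [−τ,1−τ]` and any `s > 0`, with probability at least
`1 − 2 exp(−c₁ n s²/(C_u max{τ,1−τ}² ‖β₁ − β*‖²))`, the centered sub-gradient inner-product
average is `≤ s`. -/
theorem stmt_14 :
    ∃ C c1 : ℝ, 0 < C ∧ 0 < c1 ∧
    ∀ (d n : ℕ), 0 < d → 0 < n →
    ∀ (Ω : Type) (_ : MeasurableSpace Ω) (μ : Measure Ω), IsProbabilityMeasure μ →
    ∀ (τ Cl Cu : ℝ), τ ∈ Set.Ioo (0 : ℝ) 1 → 0 < Cl → 0 < Cu →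
    ∀ (S : Matrix (Fin d) (Fin d) ℝ), S.IsSymm → S.PosDef →
    (∀ v : EuclideanSpace ℝ (Fin d),
      Cl * ‖v‖ ^ 2 ≤ quadForm S v ∧ quadForm S v ≤ Cu * ‖v‖ ^ 2) →
    ∀ (βstar : EuclideanSpace ℝ (Fin d))
      (X : Fin n → Ω → EuclideanSpace ℝ (Fin d)) (ξ : Fin n → Ω → ℝ),
    (∀ i, Measurable (X i)) → (∀ i, Measurable (ξ i)) →
    (∀ i (v : EuclideanSpace ℝ (Fin d)),
      Measure.map (fun ω => (inner ℝ v (X i ω) : ℝ)) μ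
        = gaussianReal 0 (Real.toNNReal (quadForm S v))) →
    iIndepFun (fun i ω => (X i ω, ξ i ω)) μ →
    -- part (i)
    (∀ (β1 β2 : EuclideanSpace ℝ (Fin d)) (s : ℝ), 0 < s →
      ENNReal.ofReal (1 - 2 * Real.exp (-(C * n * s ^ 2 / (Cu * ‖β1 - β2‖ ^ 2)))) ≤
        μ {ω |
          |((n : ℝ)⁻¹ * ∑ i : Fin n, qloss τ
              ((inner ℝ (X i ω) βstar : ℝ) + ξ i ω - (inner ℝ (X i ω) β1 : ℝ)))
            - ((n : ℝ)⁻¹ * ∑ i : Fin n, qloss τ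
              ((inner ℝ (X i ω) βstar : ℝ) + ξ i ω - (inner ℝ (X i ω) β2 : ℝ)))
            - ∫ ω', (((n : ℝ)⁻¹ * ∑ i : Fin n, qloss τ
                ((inner ℝ (X i ω') βstar : ℝ) + ξ i ω' - (inner ℝ (X i ω') β1 : ℝ)))
              - ((n : ℝ)⁻¹ * ∑ i : Fin n, qloss τ
                ((inner ℝ (X i ω') βstar : ℝ) + ξ i ω' - (inner ℝ (X i ω') β2 : ℝ)))) ∂μ|
            ≤ s}) ∧
    -- part (ii)
    (∀ (β1 : EuclideanSpace ℝ (Fin d)) (δ : ℝ), δ ∈ Set.Icc (-τ) (1 - τ) →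
      ∀ s : ℝ, 0 < s →
      ENNReal.ofReal (1 - 2 * Real.exp
          (-(c1 * n * s ^ 2 / (Cu * (max τ (1 - τ)) ^ 2 * ‖β1 - βstar‖ ^ 2)))) ≤
        μ {ω |
          (n : ℝ)⁻¹ *
            |∑ i : Fin n,
              ((inner ℝ (β1 - βstar) (X i ω) : ℝ) *
                  qsubgrad τ δ (ξ i ω - (inner ℝ (X i ω) (β1 - βstar) : ℝ))
                - ∫ ω', (inner ℝ (β1 - βstar) (X i ω') : ℝ) *
                    qsubgrad τ δ (ξ i ω' - (inner ℝ (X i ω') (β1 - βstar) : ℝ)) ∂μ)|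
            ≤ s}) := by
  refine ⟨1 / 4, 1 / 4, by norm_num, by norm_num, ?_⟩
  intro d n hd hn Ω _ μ _ τ Cl Cu hτ hCl hCu S _ _ hS βstar X ξ hX hξ hlaw hind
  constructor
  · intro β1 β2 s hs
    set Z : Fin n → Ω → ℝ := fun i ω =>
      qloss τ ((inner ℝ (X i ω) βstar : ℝ) + ξ i ω - (inner ℝ (X i ω) β1 : ℝ))
      - qloss τ ((inner ℝ (X i ω) βstar : ℝ) + ξ i ω - (inner ℝ (X i ω) β2 : ℝ)) with hZ0
    have hZdef : ∀ i ω, Z i ω =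
      qloss τ ((inner ℝ (X i ω) βstar : ℝ) + ξ i ω - (inner ℝ (X i ω) β1 : ℝ))
      - qloss τ ((inner ℝ (X i ω) βstar : ℝ) + ξ i ω - (inner ℝ (X i ω) β2 : ℝ)) :=
      fun _ _ => rfl
    clear_value Z
    have hql := measurable_qloss τ
    obtain ⟨g, hg⟩ : ∃ g : EuclideanSpace ℝ (Fin d) × ℝ → ℝ, g = fun p =>
      qloss τ ((inner ℝ p.1 βstar : ℝ) + p.2 - (inner ℝ p.1 β1 : ℝ))
      - qloss τ ((inner ℝ p.1 βstar : ℝ) + p.2 - (inner ℝ p.1 β2 : ℝ)) := ⟨_, rfl⟩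
    have hgm : Measurable g := by rw [hg]; fun_prop
    have hZg : Z = fun i => g ∘ (fun ω => (X i ω, ξ i ω)) := by
      funext i ω
      rw [hg, hZdef, Function.comp_apply]
    have hZm : ∀ i, Measurable (Z i) := by
      intro i
      rw [hZg]
      exact hgm.comp ((hX i).prodMk (hξ i))
    have hZind : iIndepFun Z μ := by
      rw [hZg]
      exact hind.comp (fun _ => g) (fun _ => hgm)
    have hGm : ∀ i, Measurable (fun ω => (inner ℝ (β1 - β2) (X i ω) : ℝ)) := by
      intro i; have := hX i; fun_prop
    have hZG : ∀ i ω, |Z i ω| ≤ 1 * |(inner ℝ (β1 - β2) (X i ω) : ℝ)| := by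
      intro i ω
      rw [hZdef]
      refine (qloss_lip hτ _ _).trans (le_of_eq ?_)
      rw [one_mul, real_inner_comm (X i ω) (β1 - β2), inner_sub_right, ← abs_neg]
      congr 1; ring
    set B : NNReal := ⟨Cu * ‖β1 - β2‖ ^ 2, by positivity⟩ with hBdef
    have hB : (1 : ℝ) ^ 2 * (Real.toNNReal (quadForm S (β1 - β2)) : ℝ) ≤ B := by
      rw [one_pow, one_mul, Real.coe_toNNReal']
      exact max_le (hS _).2 B.2
    have key := aux_conc hn hZm hGm (fun i => hlaw i _) zero_le_one hZG hB hZind hs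
    have hZi : ∀ i, Integrable (Z i) μ := fun i =>
      (aux_subG (hZm i) (hGm i) (hlaw i _) zero_le_one (hZG i) hB).1
    refine key.trans (measure_mono ?_)
    intro ω hω
    simp only [Set.mem_ofPred_eq] at hω ⊢
    have e : ∀ ω, ((n : ℝ)⁻¹ * ∑ i : Fin n, qloss τ
              ((inner ℝ (X i ω) βstar : ℝ) + ξ i ω - (inner ℝ (X i ω) β1 : ℝ)))
            - ((n : ℝ)⁻¹ * ∑ i : Fin n, qloss τ
              ((inner ℝ (X i ω) βstar : ℝ) + ξ i ω - (inner ℝ (X i ω) β2 : ℝ)))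
            = (n : ℝ)⁻¹ * ∑ i, Z i ω := by
      intro ω; rw [← mul_sub, ← Finset.sum_sub_distrib]; simp only [hZdef]
    simp only [e]
    rw [integral_const_mul, integral_finsetSum _ (fun i _ => hZi i), ← mul_sub,
      ← Finset.sum_sub_distrib, abs_mul, abs_of_nonneg (by positivity : (0 : ℝ) ≤ (n : ℝ)⁻¹)]
    exact hω
  · intro β1 δ hδ s hs
    have hqs := measurable_qsubgrad τ δ
    obtain ⟨g, hg⟩ : ∃ g : EuclideanSpace ℝ (Fin d) × ℝ → ℝ, g = fun p =>
      (inner ℝ (β1 - βstar) p.1 : ℝ) *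
        qsubgrad τ δ (p.2 - (inner ℝ p.1 (β1 - βstar) : ℝ)) := ⟨_, rfl⟩
    have hgm : Measurable g := by rw [hg]; fun_prop
    let Z : Fin n → Ω → ℝ := fun i ω => (inner ℝ (β1 - βstar) (X i ω) : ℝ) *
        qsubgrad τ δ (ξ i ω - (inner ℝ (X i ω) (β1 - βstar) : ℝ))
    have hZdef : ∀ i ω, Z i ω = (inner ℝ (β1 - βstar) (X i ω) : ℝ) *
        qsubgrad τ δ (ξ i ω - (inner ℝ (X i ω) (β1 - βstar) : ℝ)) := fun _ _ => rfl
    have hZg : Z = fun i => g ∘ (fun ω => (X i ω, ξ i ω)) := by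
      funext i ω
      rw [hg, hZdef, Function.comp_apply]
    have hZm : ∀ i, Measurable (Z i) := by
      intro i
      rw [hZg]
      exact hgm.comp ((hX i).prodMk (hξ i))
    have hZind : iIndepFun Z μ := by
      rw [hZg]
      exact hind.comp (fun _ => g) (fun _ => hgm)
    have hGm : ∀ i, Measurable (fun ω => (inner ℝ (β1 - βstar) (X i ω) : ℝ)) := by
      intro i; have := hX i; fun_prop
    have hK : 0 ≤ max τ (1 - τ) := hτ.1.le.trans (le_max_left _ _)
    clear_value Z
    have hZG : ∀ i ω, |Z i ω| ≤ max τ (1 - τ) * |(inner ℝ (β1 - βstar) (X i ω) : ℝ)| := by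
      intro i ω
      rw [hZdef, abs_mul, mul_comm]
      exact mul_le_mul_of_nonneg_right (qsubgrad_bound hτ hδ _) (abs_nonneg _)
    have hK : 0 ≤ max τ (1 - τ) := hτ.1.le.trans (le_max_left _ _)
    let B : NNReal := ⟨Cu * (max τ (1 - τ)) ^ 2 * ‖β1 - βstar‖ ^ 2, by positivity⟩
    have hB : (max τ (1 - τ)) ^ 2 * (Real.toNNReal (quadForm S (β1 - βstar)) : ℝ) ≤ B := by
      have h : (Real.toNNReal (quadForm S (β1 - βstar)) : ℝ) ≤ Cu * ‖β1 - βstar‖ ^ 2 := by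
        rw [Real.coe_toNNReal']
        exact max_le (hS _).2 (by positivity)
      calc _ ≤ (max τ (1 - τ)) ^ 2 * (Cu * ‖β1 - βstar‖ ^ 2) := by gcongr
        _ = Cu * (max τ (1 - τ)) ^ 2 * ‖β1 - βstar‖ ^ 2 := by ring
        _ = B := rfl
    have key := aux_conc hn hZm hGm (fun i => hlaw i _) hK hZG hB hZind hs
    simp only [hZdef] at key
    exact key
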